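/- Let n ≥ 7, let G be a subgroup of the symmetric group S_n, and let C be a left coset of G in S_n. If the proportion of derangements in C equals the proportion of derangements in the alternating group A_n, i.e., |{σ ∈ C : σ has no fixed points}| / |C| = |{σ ∈ A_n : σ has no fixed points}| / |A_n|, then G = A_n. -/

import Mathlib

/-!
Write `E n` for twice the number of even derangements of `n` letters. Clearing denominators, the
hypothesis says that the number of derangements in the coset times `[S_n : G]` equals `E n`; in
particular `[S_n : G] ∣ E n`. Since `E (m + j) ≡ ± E j` modulo `m`, the greatest common divisor of
`E n` and `n - j` divides the small number `E j`. Hence the index of an intransitive or imprimitive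
group, which is a multiple of a binomial coefficient or of the number of partitions into equal
blocks, does not divide `E n`, and `G` is primitive.

For `n ≥ 8` there is a prime `p ≤ n - 3` not dividing `E n`, so `G` contains a `p`-cycle and
Jordan's theorem gives `A_n ≤ G`. For `n = 7` one has `E 7 = 1860`, and Sylow counting leaves index
`15` or `30`; the latter does occur, for `PSL(3, 2)`. In both cases `G` and `σ G σ⁻¹` share an
element of order `3` with exactly one fixed point. Conjugation by it permutes the derangements of
`σ G` without fixing any, so that `9 ∣ 1860`, a contradiction. Finally `G = S_n` is excluded because
the signed count of derangements does not vanish.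
-/

open Equiv Finset
open scoped Pointwise commutatorElement

/-! ### Even derangements -/

section Counting

variable {α : Type*} [Fintype α] [DecidableEq α]

/-- Twice the number of even derangements of `n` letters: the number of derangements plus their
signed count, which is the determinant of the matrix with entries `0` on and `1` off the
diagonal. -/
def twiceEvenDerangements (n : ℕ) : ℤ :=
  numDerangements n + (-1) ^ (n + 1) * (n - 1)

theorem det_of_ite_zero_one :
    (Matrix.of fun i j : α => if i = j then (0 : ℤ) else 1).det =
      (-1) ^ (Fintype.card α + 1) * (Fintype.card α - 1) := by
  have rank_one_update : (Matrix.of fun i j : α => if i = j then (0 : ℤ) else 1) =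
      -(1 - Matrix.replicateCol Unit (fun _ : α => (1 : ℤ)) *
        Matrix.replicateRow Unit (fun _ : α => (1 : ℤ))) := by
    ext i j
    simp only [Matrix.of_apply, Matrix.neg_apply, Matrix.sub_apply, Matrix.mul_apply,
      Matrix.one_apply]
    split_ifs <;> simp
  rw [rank_one_update, Matrix.det_neg, Matrix.det_one_sub_mul_comm]
  simp only [Matrix.det_unique, Matrix.sub_apply, Matrix.one_apply_eq, Matrix.mul_apply,
    Matrix.replicateRow_apply, Matrix.replicateCol_apply, mul_one, sum_const, card_univ,
    nsmul_eq_mul]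
  ring

theorem sum_sign_derangements :
    ∑ τ : Perm α with τ ∈ derangements α, (Perm.sign τ : ℤ) =
      (-1) ^ (Fintype.card α + 1) * (Fintype.card α - 1) := by
  rw [← det_of_ite_zero_one, Matrix.det_apply', sum_filter]
  refine sum_congr rfl fun τ _ => ?_
  split_ifs with hτ
  · rw [prod_eq_one fun i _ => by simp [hτ i], mul_one, Int.cast_id]
  · obtain ⟨x, hx⟩ : ∃ x, τ x = x := by simpa [derangements] using hτ
    rw [prod_eq_zero (mem_univ x) (by simp [hx]), mul_zero]

theorem two_mul_ncard_even_derangements :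
    2 * (((alternatingGroup α : Set (Perm α)) ∩ derangements α).ncard : ℤ) =
      twiceEvenDerangements (Fintype.card α) := by
  have card_eq : (numDerangements (Fintype.card α) : ℤ) =
      ∑ τ : Perm α with τ ∈ derangements α, 1 := by
    rw [← card_derangements_eq_numDerangements α, sum_const, nsmul_one, Fintype.card_subtype]
  have one_add_sign (τ : Perm α) :
      1 + (Perm.sign τ : ℤ) = if Perm.sign τ = 1 then 2 else 0 := by
    rcases Int.units_eq_one_or (Perm.sign τ) with h | h <;> simp [h]
  have coe_filter_eq : (alternatingGroup α : Set (Perm α)) ∩ derangements α =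
      ({τ : Perm α | τ ∈ derangements α ∧ Perm.sign τ = 1} : Finset (Perm α)) := by
    ext τ
    simp [and_comm]
  rw [twiceEvenDerangements, card_eq, ← sum_sign_derangements, ← sum_add_distrib,
    sum_congr rfl fun τ _ => one_add_sign τ, ← sum_filter, filter_filter, sum_const,
    coe_filter_eq, Set.ncard_coe_finset, nsmul_eq_mul, mul_comm]

theorem ncard_coset_derangements_mul_index [Nontrivial α] {G : Subgroup (Perm α)} {σ : Perm α}
    (h : ((σ • (G : Set (Perm α)) ∩ derangements α).ncard : ℚ) / (σ • (G : Set (Perm α))).ncard =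
      ((alternatingGroup α : Set (Perm α)) ∩ derangements α).ncard /
        Nat.card (alternatingGroup α)) :
    ((σ • (G : Set (Perm α)) ∩ derangements α).ncard * G.index : ℤ) =
      twiceEvenDerangements (Fintype.card α) := by
  rw [← two_mul_ncard_even_derangements]
  set a := (σ • (G : Set (Perm α)) ∩ derangements α).ncard
  set b := ((alternatingGroup α : Set (Perm α)) ∩ derangements α).ncard
  have card_mul_index : Nat.card G * G.index = 2 * Nat.card (alternatingGroup α) := by
    rw [G.card_mul_index, two_mul_nat_card_alternatingGroup]
  have cross_mul : a * Nat.card (alternatingGroup α) = b * Nat.card G := by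
    have card_coset : (σ • (G : Set (Perm α))).ncard = Nat.card G := Set.ncard_smul_set ..
    rw [card_coset, div_eq_div_iff (by exact_mod_cast Nat.card_pos.ne')
      (by exact_mod_cast Nat.card_pos.ne')] at h
    exact_mod_cast h
  have : Nat.card G * (a * G.index) = Nat.card G * (2 * b) := by
    linear_combination a * card_mul_index + 2 * cross_mul
  exact_mod_cast Nat.eq_of_mul_eq_mul_left Nat.card_pos this

end Counting

theorem ne_top_of_ncard_coset_derangements_mul_index {α : Type*} [Fintype α] [Nontrivial α]
    {G : Subgroup (Perm α)} {σ : Perm α}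
    (h : ((σ • (G : Set (Perm α)) ∩ derangements α).ncard * G.index : ℤ) =
      twiceEvenDerangements (Fintype.card α)) :
    G ≠ ⊤ := by
  rintro rfl
  have card_eq : (derangements α).ncard = numDerangements (Fintype.card α) := by
    classical
    rw [← card_derangements_eq_numDerangements α, ← Nat.card_eq_fintype_card,
      Nat.card_coe_set_eq]
  rw [Subgroup.coe_top, Set.smul_set_univ, Set.univ_inter, card_eq, Subgroup.index_top,
    Nat.cast_one, mul_one, twiceEvenDerangements, left_eq_add, mul_eq_zero] at h
  have := h.resolve_left (by simp)
  have := Fintype.one_lt_card (α := α)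
  omega

/-! ### Arithmetic of `twiceEvenDerangements` -/

section Congruence

theorem numDerangements_add_modEq (m j : ℕ) :
    (numDerangements (m + j) : ℤ) ≡ (-1) ^ m * numDerangements j [ZMOD m] := by
  induction j with
  | zero =>
    cases m with
    | zero => simp
    | succ m =>
      have := numDerangements_succ m
      rw [Int.modEq_iff_dvd]
      refine ⟨-numDerangements m, ?_⟩
      simp only [add_zero, this, numDerangements_zero]
      push_cast
      ring
  | succ j ih =>
    rw [← add_assoc, numDerangements_succ, numDerangements_succ]
    have hm : ((m + j : ℕ) : ℤ) + 1 ≡ j + 1 [ZMOD m] := by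
      simp [Int.modEq_iff_dvd]
    calc ((m + j : ℕ) + 1 : ℤ) * numDerangements (m + j) - (-1) ^ (m + j)
        ≡ (j + 1) * ((-1) ^ m * numDerangements j) - (-1) ^ (m + j) [ZMOD m] :=
          (hm.mul ih).sub_right _
      _ = (-1) ^ m * ((j + 1) * numDerangements j - (-1) ^ j) := by ring

theorem twiceEvenDerangements_add_modEq (m j : ℕ) :
    twiceEvenDerangements (m + j) ≡ (-1) ^ m * twiceEvenDerangements j [ZMOD m] := by
  have hm : ((m + j : ℕ) : ℤ) - 1 ≡ j - 1 [ZMOD m] := by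
    simp [Int.modEq_iff_dvd]
  calc twiceEvenDerangements (m + j)
      ≡ (-1) ^ m * numDerangements j + (-1) ^ (m + j + 1) * (j - 1) [ZMOD m] :=
        (numDerangements_add_modEq m j).add (hm.mul_left _)
    _ = (-1) ^ m * twiceEvenDerangements j := by
      rw [twiceEvenDerangements]
      ring

theorem dvd_twiceEvenDerangements_of_dvd_sub {a n j : ℕ} (hj : j ≤ n) (ha : a ∣ n - j)
    (h : (a : ℤ) ∣ twiceEvenDerangements n) : (a : ℤ) ∣ twiceEvenDerangements j := by
  obtain ⟨m, rfl⟩ := Nat.exists_eq_add_of_le' hj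
  rw [Nat.add_sub_cancel] at ha
  have := ((twiceEvenDerangements_add_modEq m j).of_dvd (Int.natCast_dvd_natCast.mpr ha)).dvd
  exact ((isUnit_neg_one.pow m).dvd_mul_left).mp ((dvd_iff_dvd_of_dvd_sub this).mpr h)

theorem twiceEvenDerangements_zero : twiceEvenDerangements 0 = 2 := rfl

theorem twiceEvenDerangements_three : twiceEvenDerangements 3 = 4 := rfl

theorem twiceEvenDerangements_four : twiceEvenDerangements 4 = 6 := rfl

theorem twiceEvenDerangements_five : twiceEvenDerangements 5 = 48 := rfl

theorem twiceEvenDerangements_seven : twiceEvenDerangements 7 = 1860 := by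
  decide

end Congruence

section Arithmetic

theorem sub_dvd_mul_natAbs_of_dvd_mul {n j x B : ℕ} (hj : j ≤ n)
    (hB : (B : ℤ) ∣ twiceEvenDerangements n) (h : n - j ∣ x * B) :
    n - j ∣ x * (twiceEvenDerangements j).natAbs := by
  have gcd_dvd : (n - j).gcd B ∣ (twiceEvenDerangements j).natAbs :=
    Int.natCast_dvd.mp <| dvd_twiceEvenDerangements_of_dvd_sub hj (Nat.gcd_dvd_left _ _) <|
      (Int.natCast_dvd_natCast.mpr (Nat.gcd_dvd_right _ _)).trans hB
  have : n - j ∣ x * (n - j).gcd B := by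
    rw [← Nat.gcd_mul_left]
    exact Nat.dvd_gcd (dvd_mul_left _ _) h
  exact this.trans (mul_dvd_mul_left x gcd_dvd)

theorem sub_dvd_descFactorial {N j k : ℕ} (h : j < k) : N - j ∣ N.descFactorial k := by
  rw [Nat.descFactorial_eq_prod_range]
  exact dvd_prod_of_mem _ (mem_range.mpr h)

theorem sub_dvd_descFactorial_mul_choose (N j k : ℕ) :
    N - j ∣ k.descFactorial (j + 1) * N.choose k := by
  rcases lt_or_ge k (j + 1) with hk | hk
  · rw [Nat.descFactorial_of_lt hk, zero_mul]
    exact dvd_zero _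
  · have factor : k.descFactorial (j + 1) * N.choose k * (k - (j + 1)).factorial =
        N.descFactorial (j + 1) * ((N - (j + 1)).choose (k - (j + 1)) *
          (k - (j + 1)).factorial) := by
      calc _ = (k - (j + 1)).factorial * k.descFactorial (j + 1) * N.choose k := by ring
        _ = N.descFactorial k := by
          rw [Nat.factorial_mul_descFactorial hk, Nat.descFactorial_eq_factorial_mul_choose]
        _ = (N - (j + 1)).descFactorial (k - (j + 1)) * N.descFactorial (j + 1) :=
          (Nat.descFactorial_mul_descFactorial hk).symm
        _ = _ := by
          rw [Nat.descFactorial_eq_factorial_mul_choose]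
          ring
    rw [← mul_assoc] at factor
    rw [Nat.eq_of_mul_eq_mul_right (Nat.factorial_pos _) factor]
    exact (sub_dvd_descFactorial j.lt_succ_self).mul_right _

theorem descFactorial_pow_mul_uniformBell (r : ℕ) {d k : ℕ} (hk : k < d) :
    d.descFactorial k ^ r * Nat.uniformBell r d =
      (r * d).descFactorial (r * k) * Nat.uniformBell r (d - k) := by
  have positive : 0 < (d - k).factorial ^ r * r.factorial := by positivity
  refine Nat.eq_of_mul_eq_mul_right positive ?_
  calc d.descFactorial k ^ r * Nat.uniformBell r d * ((d - k).factorial ^ r * r.factorial)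
      = Nat.uniformBell r d * ((d - k).factorial * d.descFactorial k) ^ r * r.factorial := by
        ring
    _ = (r * d).factorial := by
        rw [Nat.factorial_mul_descFactorial hk.le, Nat.uniformBell_mul_eq r (by omega)]
    _ = (r * (d - k)).factorial * (r * d).descFactorial (r * k) := by
        rw [Nat.mul_sub, Nat.factorial_mul_descFactorial (Nat.mul_le_mul_left r hk.le)]
    _ = (r * d).descFactorial (r * k) * Nat.uniformBell r (d - k) *
          ((d - k).factorial ^ r * r.factorial) := by
        rw [← Nat.uniformBell_mul_eq r (by omega : d - k ≠ 0)]
        ring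

theorem sub_dvd_descFactorial_pow_mul_uniformBell {r d j k : ℕ} (hk : k < d) (hj : j < r * k) :
    r * d - j ∣ d.descFactorial k ^ r * Nat.uniformBell r d := by
  rw [descFactorial_pow_mul_uniformBell r hk]
  exact (sub_dvd_descFactorial hj).mul_right _

theorem choose_dvd_uniformBell {r : ℕ} (hr : r ≠ 0) (d : ℕ) :
    (r * d - 1).choose (d - 1) ∣ Nat.uniformBell r d := by
  obtain ⟨r, rfl⟩ := Nat.exists_eq_succ_of_ne_zero hr
  rw [Nat.uniformBell_succ_left, Nat.succ_mul]
  exact dvd_mul_right _ _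

theorem coprime_sub_three_four {n : ℕ} (hn : 3 ≤ n) (heven : Even n) : (n - 3).Coprime 4 :=
  Nat.Coprime.pow_right 2 <| Nat.coprime_two_right.mpr <| Nat.Even.sub_odd hn heven (by decide)

theorem sub_three_dvd_of_choose_dvd {n d : ℕ} (hn : 3 ≤ n) (heven : Even n)
    (h : ((n - 1).choose (d - 1) : ℤ) ∣ twiceEvenDerangements n)
    (coprime_sub_one : (n - 3).Coprime (d - 1)) (coprime_sub_two : (n - 3).Coprime (d - 2)) :
    n - 3 ∣ d - 3 := by
  have hdvd : n - 3 ∣ (d - 1) * (d - 2) * (d - 3) * 4 := by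
    have := sub_dvd_mul_natAbs_of_dvd_mul hn h
      (sub_dvd_descFactorial_mul_choose (n - 1) 2 (d - 1))
    simpa [twiceEvenDerangements_three, Nat.descFactorial_succ, Nat.sub_sub, mul_comm,
      mul_left_comm] using this
  exact (coprime_sub_one.mul_right coprime_sub_two).dvd_of_dvd_mul_left
    ((coprime_sub_three_four hn heven).dvd_of_dvd_mul_right hdvd)

theorem not_middle_choose_dvd_twiceEvenDerangements {d : ℕ} (hd : 4 ≤ d) :
    ¬ ((2 * d - 1).choose (d - 1) : ℤ) ∣ twiceEvenDerangements (2 * d) := fun h => by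
  obtain ⟨e, rfl⟩ := Nat.exists_eq_add_of_le' hd
  have coprime_sub_one : (2 * (e + 4) - 3).Coprime (e + 4 - 1) :=
    Nat.isCoprime_iff_coprime.mp ⟨-1, 2, by push_cast [Nat.mul_add]; ring⟩
  have coprime_sub_two : (2 * (e + 4) - 3).Coprime (e + 4 - 2) :=
    Nat.isCoprime_iff_coprime.mp ⟨1, -2, by push_cast [Nat.mul_add]; ring⟩
  have := Nat.le_of_dvd (by omega) (sub_three_dvd_of_choose_dvd (by omega) (even_two_mul _) h
    coprime_sub_one coprime_sub_two)
  omega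

theorem not_choose_dvd_twiceEvenDerangements {n m : ℕ} (hn : 7 ≤ n) (hm : m ≠ 0) (hmn : m < n) :
    ¬ (n.choose m : ℤ) ∣ twiceEvenDerangements n := fun h => by
  have hdvd : n ∣ m * 2 := by
    simpa [twiceEvenDerangements_zero] using sub_dvd_mul_natAbs_of_dvd_mul n.zero_le h
      (by simpa using sub_dvd_descFactorial_mul_choose n 0 m)
  obtain rfl : m * 2 = n := Nat.eq_of_dvd_of_lt_two_mul (by omega) hdvd (by omega)
  rw [mul_comm] at h
  refine not_middle_choose_dvd_twiceEvenDerangements (d := m) (by omega)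
    (dvd_trans (Int.natCast_dvd_natCast.mpr ?_) h)
  obtain ⟨k, rfl⟩ := Nat.exists_eq_succ_of_ne_zero hm
  have : (2 * (k + 1)).choose (k + 1) = (2 * k + 1).choose k + (2 * k + 1).choose k := by
    rw [Nat.mul_succ, Nat.choose_succ_succ, Nat.choose_symm_half]
  rw [Nat.succ_eq_add_one, this]
  exact Dvd.intro_left 2 (two_mul _)

theorem not_uniformBell_three_dvd_twiceEvenDerangements {d : ℕ} (hd : 3 ≤ d) :
    ¬ (Nat.uniformBell 3 d : ℤ) ∣ twiceEvenDerangements (3 * d) := fun h => by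
  have sub_dvd {j a b : ℕ} (hj : j < 6) (ha : 3 * d ≡ a [MOD 3 * d - j])
      (hb : 3 * (d - 1) ≡ b [MOD 3 * d - j]) :
      3 * d - j ∣ (a * b) ^ 3 * (twiceEvenDerangements j).natAbs := by
    have hdvd := sub_dvd_mul_natAbs_of_dvd_mul (by omega) h
      (sub_dvd_descFactorial_pow_mul_uniformBell (k := 2) (by omega) hj)
    -- The factor `3 ^ 6` turns `d * (d - 1)` into `3 * d * (3 * (d - 1))`, congruent to `a * b`.
    refine ((((ha.mul hb).pow 3).mul_right _).dvd_iff dvd_rfl).mp ?_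
    refine (hdvd.mul_left (3 ^ 6)).trans (dvd_of_eq ?_)
    simp only [Nat.descFactorial_succ, Nat.descFactorial_zero, tsub_zero]
    ring
  have hfour : 3 * d - 4 ∣ 384 := sub_dvd (a := 4) (b := 1) (by norm_num)
    ((Nat.modEq_iff_dvd' (by omega)).mpr dvd_rfl).symm
    ((Nat.modEq_iff_dvd' (by omega)).mpr (dvd_of_eq (by omega))).symm
  have hfive : 3 * d - 5 ∣ 48000 := sub_dvd (a := 5) (b := 2) (by norm_num)
    ((Nat.modEq_iff_dvd' (by omega)).mpr dvd_rfl).symm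
    ((Nat.modEq_iff_dvd' (by omega)).mpr (dvd_of_eq (by omega))).symm
  have hd' : d < 130 := by
    have := Nat.le_of_dvd (by norm_num) hfour
    omega
  have search : ∀ d < 130, 3 ≤ d → 3 * d - 4 ∣ 384 → ¬ 3 * d - 5 ∣ 48000 := by decide
  exact search d hd' hd hfour hfive

theorem three_dvd_of_sub_three_dvd_pow {r d : ℕ} (hn : 5 ≤ r * d) (h : r * d - 3 ∣ d ^ r) :
    3 ∣ d := by
  obtain ⟨p, hp, hpn⟩ := Nat.exists_prime_and_dvd (by omega : r * d - 3 ≠ 1)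
  have hpd : p ∣ d := hp.dvd_of_dvd_pow (hpn.trans h)
  have : p ∣ 3 := (Nat.dvd_sub_iff_right (by omega) (hpd.mul_left r)).mp hpn
  rwa [(Nat.prime_dvd_prime_iff_eq hp Nat.prime_three).mp this] at hpd

theorem eq_three_of_uniformBell_dvd {r d : ℕ} (hr : 4 ≤ r) (hd : 2 ≤ d) (heven : Even (r * d))
    (h : (Nat.uniformBell r d : ℤ) ∣ twiceEvenDerangements (r * d)) : d = 3 := by
  have hn : 4 * d ≤ r * d := Nat.mul_le_mul_right d hr
  have coprime_four := coprime_sub_three_four (by omega) heven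
  have hdvd : r * d - 3 ∣ d ^ r := by
    refine coprime_four.dvd_of_dvd_mul_right ?_
    simpa [twiceEvenDerangements_three] using
      sub_dvd_mul_natAbs_of_dvd_mul (j := 3) (by omega) h
        (sub_dvd_descFactorial_pow_mul_uniformBell (k := 1) (by omega) (by omega))
  have coprime_sub_one : (r * d - 3).Coprime (d - 1) :=
    ((Nat.coprime_self_sub_right (by omega)).mpr (Nat.coprime_one_right d)).pow_left r
      |>.coprime_dvd_left hdvd
  have coprime_sub_two : (r * d - 3).Coprime (d - 2) := by
    refine Nat.coprime_of_dvd fun p hp hpn hpd => ?_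
    have hp2 : p ∣ 2 := (Nat.dvd_sub_iff_right hd (hp.dvd_of_dvd_pow (hpn.trans hdvd))).mp hpd
    exact hp.one_lt.ne' (Nat.eq_one_of_dvd_coprimes coprime_four hpn (hp2.mul_right 2))
  obtain ⟨k, rfl⟩ := three_dvd_of_sub_three_dvd_pow (by omega) hdvd
  have := Nat.eq_zero_of_dvd_of_lt (sub_three_dvd_of_choose_dvd (by omega) heven
    ((Int.natCast_dvd_natCast.mpr (choose_dvd_uniformBell (by omega) _)).trans h)
    coprime_sub_one coprime_sub_two) (by omega)
  omega

theorem not_uniformBell_dvd_twiceEvenDerangements_of_even {r d : ℕ} (hr : 4 ≤ r) (hd : 2 ≤ d)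
    (heven : Even (r * d)) :
    ¬ (Nat.uniformBell r d : ℤ) ∣ twiceEvenDerangements (r * d) := fun h => by
  obtain rfl := eq_three_of_uniformBell_dvd hr hd heven h
  have hdvd : r * 3 - 5 ∣ 6 ^ r * 48 := by
    simpa [twiceEvenDerangements_five, Nat.descFactorial_succ] using
      sub_dvd_mul_natAbs_of_dvd_mul (j := 5) (by omega) h
        (sub_dvd_descFactorial_pow_mul_uniformBell (k := 2) (by omega) (by omega))
  have coprime_two : (r * 3 - 5).Coprime 2 :=
    Nat.coprime_two_right.mpr (Nat.Even.sub_odd (by omega) heven (by decide))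
  have coprime_three : (r * 3 - 5).Coprime 3 :=
    ((Nat.Prime.coprime_iff_not_dvd Nat.prime_three).mpr (by omega)).symm
  have coprime_prod : (r * 3 - 5).Coprime (6 ^ r * 48) :=
    ((coprime_two.mul_right coprime_three).pow_right r).mul_right
      ((coprime_two.pow_right 4).mul_right coprime_three)
  have := coprime_prod.eq_one_of_dvd hdvd
  omega

theorem not_uniformBell_dvd_twiceEvenDerangements_of_odd {r d : ℕ} (hr : 5 ≤ r) (hd : 2 ≤ d)
    (hodd : Odd (r * d)) :
    ¬ (Nat.uniformBell r d : ℤ) ∣ twiceEvenDerangements (r * d) := fun h => by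
  have hn : 5 * 2 ≤ r * d := Nat.mul_le_mul hr hd
  have hdvd : r * d - 4 ∣ d ^ r * 6 := by
    simpa [twiceEvenDerangements_four] using
      sub_dvd_mul_natAbs_of_dvd_mul (j := 4) (by omega) h
        (sub_dvd_descFactorial_pow_mul_uniformBell (k := 1) (by omega) (by omega))
  have coprime_pow : (r * d - 4).Coprime (d ^ r) := by
    refine Nat.Coprime.pow_right r (Nat.coprime_of_dvd fun p hp hpn hpd => ?_)
    have hp4 : p ∣ 2 ^ 2 := (Nat.dvd_sub_iff_right (by omega) (hpd.mul_left r)).mp hpn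
    obtain rfl := (Nat.prime_dvd_prime_iff_eq hp Nat.prime_two).mp (hp.dvd_of_dvd_pow hp4)
    exact (Nat.not_even_iff_odd.mpr hodd) (even_iff_two_dvd.mpr (hpd.mul_left r))
  have := Nat.le_of_dvd (by norm_num) (coprime_pow.dvd_of_dvd_mul_left hdvd)
  obtain ⟨c, hc⟩ := hodd
  omega

theorem not_uniformBell_dvd_twiceEvenDerangements {r d : ℕ} (hr : 2 ≤ r) (hd : 2 ≤ d)
    (hn : 7 ≤ r * d) :
    ¬ (Nat.uniformBell r d : ℤ) ∣ twiceEvenDerangements (r * d) := by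
  rcases Nat.even_or_odd (r * d) with heven | hodd
  · obtain rfl | rfl | hr : r = 2 ∨ r = 3 ∨ 4 ≤ r := by omega
    · exact fun h => not_middle_choose_dvd_twiceEvenDerangements (by omega) <|
        (Int.natCast_dvd_natCast.mpr (choose_dvd_uniformBell two_ne_zero d)).trans h
    · exact not_uniformBell_three_dvd_twiceEvenDerangements (by omega)
    · exact not_uniformBell_dvd_twiceEvenDerangements_of_even hr hd heven
  · obtain rfl | hr : r = 3 ∨ 5 ≤ r := by
      by_contra! hcon
      obtain rfl | rfl : r = 2 ∨ r = 4 := by omega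
      all_goals
        obtain ⟨c, hc⟩ := hodd
        omega
    · exact not_uniformBell_three_dvd_twiceEvenDerangements (by omega)
    · exact not_uniformBell_dvd_twiceEvenDerangements_of_odd hr hd hodd

theorem three_pow_mod_eight (a : ℕ) : 3 ^ a % 8 = 1 ∨ 3 ^ a % 8 = 3 := by
  induction a with
  | zero => simp
  | succ a ih => omega

/-- A prime factor of `n - 3` or `n - 4` works, by the values `4` and `6` of
`twiceEvenDerangements` at `3` and `4`: otherwise `n - 3` is a power of `2` and `n - 4` a power of
`3`, which is impossible modulo `8`. -/
theorem exists_prime_not_dvd_twiceEvenDerangements {n : ℕ} (hn : 8 ≤ n) :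
    ∃ p, p.Prime ∧ p + 3 ≤ n ∧ ¬ (p : ℤ) ∣ twiceEvenDerangements n := by
  by_cases! h3 : ∃ p, p.Prime ∧ p ∣ n - 3 ∧ p ≠ 2
  · obtain ⟨p, hp, hpn, hp2⟩ := h3
    refine ⟨p, hp, by have := Nat.le_of_dvd (by omega) hpn; omega, fun h => hp2 ?_⟩
    have hp4 : p ∣ 2 ^ 2 :=
      Int.natCast_dvd_natCast.mp (dvd_twiceEvenDerangements_of_dvd_sub (by omega) hpn h)
    exact (Nat.prime_dvd_prime_iff_eq hp Nat.prime_two).mp (hp.dvd_of_dvd_pow hp4)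
  have two_pow : n - 3 = 2 ^ (n - 3).primeFactorsList.length :=
    Nat.eq_prime_pow_of_unique_prime_dvd (by omega) fun hq hqn => h3 _ hq hqn
  have sub_four_mod : (n - 4) % 8 = 7 := by
    generalize (n - 3).primeFactorsList.length = l at two_pow
    obtain ⟨k, rfl⟩ : ∃ k, l = k + 3 := Nat.exists_eq_add_of_le' <| by
      by_contra! hl
      interval_cases l <;> omega
    have : 2 ^ (k + 3) = 8 * 2 ^ k := by ring
    omega
  obtain ⟨p, hp, hpn, hp3⟩ : ∃ p, p.Prime ∧ p ∣ n - 4 ∧ p ≠ 3 := by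
    by_contra! h4
    have three_pow : n - 4 = 3 ^ (n - 4).primeFactorsList.length :=
      Nat.eq_prime_pow_of_unique_prime_dvd (by omega) fun hq hqn => h4 _ hq hqn
    have := three_pow_mod_eight (n - 4).primeFactorsList.length
    omega
  have hp2 : p ≠ 2 := by
    rintro rfl
    omega
  refine ⟨p, hp, ?_, fun h => ?_⟩
  · have := Nat.le_of_dvd (by omega) hpn
    omega
  · have hp6 : p ∣ 2 * 3 :=
      Int.natCast_dvd_natCast.mp (dvd_twiceEvenDerangements_of_dvd_sub (by omega) hpn h)
    rcases hp.dvd_mul.mp hp6 with h | h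
    · exact hp2 ((Nat.prime_dvd_prime_iff_eq hp Nat.prime_two).mp h)
    · exact hp3 ((Nat.prime_dvd_prime_iff_eq hp Nat.prime_three).mp h)

end Arithmetic

/-! ### Elements of prime order -/

section PrimeOrder

variable {K : Type*} [Group K]

theorem exists_conj_mem_of_not_dvd_index [Finite K] {H : Subgroup K} {p : ℕ} (hp : p.Prime)
    (hH : ¬ p ∣ H.index) {g : K} (hg : orderOf g = p) : ∃ t, t⁻¹ * g * t ∈ H := by
  have : Fact p.Prime := ⟨hp⟩
  have isPGroup_zpowers : IsPGroup p (Subgroup.zpowers g) :=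
    IsPGroup.of_card (n := 1) (by rw [Nat.card_zpowers, hg, pow_one])
  obtain ⟨x, hx⟩ := isPGroup_zpowers.nonempty_fixed_point_of_prime_not_dvd_card (K ⧸ H) hH
  obtain ⟨t, rfl⟩ := QuotientGroup.mk_surjective x
  have fixed : ((g * t : K) : K ⧸ H) = t := hx ⟨g, Subgroup.mem_zpowers g⟩
  exact ⟨t, by simpa only [mul_assoc] using QuotientGroup.eq.mp fixed.symm⟩

theorem not_dvd_index_zpowers {p : ℕ} (hp : p.Prime) (hK : Nat.card K ∣ p.factorial) {g : K}
    (hg : orderOf g = p) : ¬ p ∣ (Subgroup.zpowers g).index := fun hdvd => by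
  have sq_dvd : p * p ∣ p * (p - 1).factorial := by
    rw [Nat.mul_factorial_pred hp.ne_zero]
    refine dvd_trans ?_ hK
    rw [← (Subgroup.zpowers g).card_mul_index, Nat.card_zpowers, hg]
    exact mul_dvd_mul_left p hdvd
  have := hp.dvd_factorial.mp (Nat.dvd_of_mul_dvd_mul_left hp.pos sq_dvd)
  have := hp.pos
  omega

theorem exists_conj_mem_zpowers [Finite K] {p : ℕ} (hp : p.Prime)
    (hK : Nat.card K ∣ p.factorial) {g h : K} (hg : orderOf g = p) (hh : orderOf h = p) :
    ∃ t, t⁻¹ * h * t ∈ Subgroup.zpowers g :=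
  exists_conj_mem_of_not_dvd_index hp (not_dvd_index_zpowers hp hK hg) hh

theorem commute_commutatorElement_of_conj_mem_zpowers {g y z : K}
    (hy : y⁻¹ * g * y ∈ Subgroup.zpowers g) (hz : z⁻¹ * g * z ∈ Subgroup.zpowers g) :
    Commute ⁅y, z⁆ g := by
  obtain ⟨a, ha⟩ := hy
  obtain ⟨b, hb⟩ := hz
  simp only at ha hb
  have conj_mul : (y * z)⁻¹ * g * (y * z) = g ^ (b * a) := by
    calc (y * z)⁻¹ * g * (y * z) = z⁻¹ * (y⁻¹ * g * y) * z⁻¹⁻¹ := by group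
      _ = g ^ (b * a) := by rw [← ha, ← conj_zpow, inv_inv, ← hb, zpow_mul]
  have conj_mul' : (z * y)⁻¹ * g * (z * y) = g ^ (a * b) := by
    calc (z * y)⁻¹ * g * (z * y) = y⁻¹ * (z⁻¹ * g * z) * y⁻¹⁻¹ := by group
      _ = g ^ (a * b) := by rw [← hb, ← conj_zpow, inv_inv, ← ha, zpow_mul]
  refine mul_inv_eq_iff_eq_mul.mp ?_
  calc ⁅y, z⁆ * g * ⁅y, z⁆⁻¹ = y * z * ((z * y)⁻¹ * g * (z * y)) * (y * z)⁻¹ := by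
        rw [commutatorElement_def]; group
    _ = g := by rw [conj_mul', mul_comm a b, ← conj_mul]; group

theorem mem_of_index_lt_orderOf {H : Subgroup K} (hH : H.index ≠ 0) {g : K}
    (hp : (orderOf g).Prime) (hg : H.index < orderOf g) : g ∈ H := by
  obtain ⟨k, hk, hkH, hkmem⟩ := Subgroup.exists_pow_mem_of_index_ne_zero hH g
  have coprime : (orderOf g).Coprime k := Nat.coprime_of_lt_prime hk.ne' (by omega) hp
  exact Subgroup.zpowers_le.mpr hkmem (mem_zpowers_pow_iff.mpr coprime.symm)

theorem index_normalizer_zpowers_modEq_one [Finite K] {p : ℕ} (hp : p.Prime) {g : K}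
    (hg : orderOf g = p) (hindex : ¬ p ∣ (Subgroup.zpowers g).index) :
    (Subgroup.normalizer (Subgroup.zpowers g : Set K)).index ≡ 1 [MOD p] := by
  have := Fact.mk hp
  have isPGroup : IsPGroup p (Subgroup.zpowers g) :=
    IsPGroup.of_card (n := 1) (by rw [Nat.card_zpowers, hg, pow_one])
  exact (isPGroup.toSylow hindex).card_eq_index_normalizer ▸ card_sylow_modEq_one p K

theorem card_normalizer_zpowers_dvd [Finite K] {g : K}
    (hg : Subgroup.centralizer (Subgroup.zpowers g : Set K) ≤ Subgroup.zpowers g) :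
    Nat.card (Subgroup.normalizer (Subgroup.zpowers g : Set K)) ∣
      orderOf g * (orderOf g).totient := by
  let φ := (Subgroup.zpowers g).normalizerMonoidHom
  have card_ker : Nat.card φ.ker ∣ orderOf g := by
    rw [Subgroup.normalizerMonoidHom_ker, ← Nat.card_zpowers]
    exact (Subgroup.card_comap_dvd_of_injective _ _ (Subgroup.subtype_injective _)).trans
      (Subgroup.card_dvd_of_le hg)
  have card_range : Nat.card φ.range ∣ (orderOf g).totient := by
    rw [← Nat.card_zpowers, ← IsCyclic.card_mulAut]
    exact Subgroup.card_subgroup_dvd_card φ.range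
  rw [← φ.ker.card_mul_index, Subgroup.index_ker]
  exact mul_dvd_mul card_ker card_range

theorem exists_mem_orderOf_eq_prime [Finite K] {H : Subgroup K} {p : ℕ}
    (hp : p.Prime) (hH : p ∣ Nat.card H) : ∃ g ∈ H, orderOf g = p := by
  have := Fact.mk hp
  obtain ⟨g, hg⟩ := exists_prime_orderOf_dvd_card' p hH
  exact ⟨g, g.2, by rw [Subgroup.orderOf_coe, hg]⟩

theorem card_inf_mul_relIndex (H L : Subgroup K) :
    Nat.card (H ⊓ L : Subgroup K) * L.relIndex H = Nat.card H := by
  rw [← Subgroup.inf_relIndex_left, ← Subgroup.relIndex_bot_left, ← Subgroup.relIndex_bot_left]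
  exact Subgroup.relIndex_mul_relIndex _ _ _ bot_le inf_le_left

end PrimeOrder

/-! ### Jordan's theorem on cycles of prime length -/

theorem exists_mem_eqOn_of_isMultiplyPretransitive {α : Type*}
    {G : Subgroup (Perm α)} {s : Finset α} (hG : MulAction.IsMultiplyPretransitive G α #s)
    (x : Perm α) : ∃ y ∈ G, ∀ a ∈ s, y a = x a := by
  let enum : Fin #s ↪ α := s.equivFin.symm.toEmbedding.trans (.subtype _)
  obtain ⟨y, hy⟩ := MulAction.exists_smul_eq G enum (enum.trans x.toEmbedding)
  refine ⟨y, y.2, fun a ha => ?_⟩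
  have enum_apply : enum (s.equivFin ⟨a, ha⟩) = a := by simp [enum]
  have : (y : Perm α) (enum (s.equivFin ⟨a, ha⟩)) = x (enum (s.equivFin ⟨a, ha⟩)) :=
    DFunLike.congr_fun hy (s.equivFin ⟨a, ha⟩)
  rwa [enum_apply] at this

theorem card_fixingSubgroup_compl {α : Type*} (s : Finset α) :
    Nat.card (fixingSubgroup (Perm α) (s : Set α)ᶜ) = (#s).factorial := by
  classical
  have := Nat.card_congr (Perm.subtypeEquivSubtypePerm (· ∈ s))
  rw [Nat.card_perm, Nat.card_eq_fintype_card, Fintype.card_coe] at this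
  rw [this]
  refine Nat.card_congr (Equiv.subtypeEquivRight fun f => ?_)
  simp [mem_fixingSubgroup_iff]

section PrimeCycle

variable {α : Type*} [Fintype α] [DecidableEq α] {G : Subgroup (Perm α)}

theorem exists_isCycle_mem_of_not_dvd_index {p : ℕ} (hp : p.Prime) (hpα : p ≤ Fintype.card α)
    (hG : ¬ p ∣ G.index) : ∃ g ∈ G, g.IsCycle ∧ #g.support = p := by
  obtain ⟨g, hg⟩ := (Perm.exists_with_cycleType_iff α (m := {p})).mpr
    ⟨by simpa using hpα, by simpa using hp.two_le⟩
  have isCycle : g.IsCycle := by simp [← Perm.card_cycleType_eq_one, hg]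
  have card_support : #g.support = p := by simp [← Perm.sum_cycleType, hg]
  obtain ⟨t, ht⟩ := exists_conj_mem_of_not_dvd_index hp hG (isCycle.orderOf.trans card_support)
  refine ⟨_, ht, by simpa using isCycle.conj (g := t⁻¹), ?_⟩
  rw [← card_support, ← Perm.card_support_conj (σ := t⁻¹) (τ := g), inv_inv]

theorem isMultiplyPretransitive_card_compl_support (hG : MulAction.IsPreprimitive G α)
    {g : Perm α} (hg : g.IsCycle) (hp : (#g.support).Prime) (hgG : g ∈ G)
    (hα : #g.support < Fintype.card α) :
    MulAction.IsMultiplyPretransitive G α #g.supportᶜ := by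
  have card_compl : #g.supportᶜ = Fintype.card α - #g.support := card_compl _
  obtain ⟨m, hm⟩ : ∃ m, #g.supportᶜ = m + 1 := Nat.exists_eq_add_of_le' (by omega)
  have := hp.two_le
  have card_moved : Nat.card (SubMulAction.ofFixingSubgroup G (g.support : Set α)ᶜ) =
      #g.support := by
    have hmem (x : α) : x ∈ SubMulAction.ofFixingSubgroup G ((g.support : Set α)ᶜ) ↔
        x ∈ g.support := by
      simp [SubMulAction.mem_ofFixingSubgroup_iff]
    refine (Nat.card_congr (Equiv.subtypeEquivRight hmem)).trans ?_
    rw [Nat.card_eq_fintype_card, Fintype.card_coe]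
  have : MulAction.IsMultiplyPreprimitive G α (m + 2) := by
    refine hG.isMultiplyPreprimitive (s := (g.support : Set α)ᶜ) ?_ ?_ ?_
    · rw [← coe_compl, Set.ncard_coe_finset, hm]
    · rw [Nat.card_eq_fintype_card]
      omega
    · have := Perm.isPretransitive_of_isCycle_mem hg hgG
      exact MulAction.IsPreprimitive.of_prime_card (card_moved ▸ hp)
  have : MulAction.IsMultiplyPretransitive G α (m + 2) :=
    MulAction.IsMultiplyPreprimitive.isMultiplyPretransitive ..
  rw [hm]
  exact MulAction.isMultiplyPretransitive_of_le (n := m + 2) (by omega)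
    (by rw [Nat.card_eq_fintype_card]; omega)

theorem exists_mem_conj_mem_zpowers_eqOn_compl_support {g : Perm α} (hg : g.IsCycle)
    (hp : (#g.support).Prime) (hgG : g ∈ G)
    (hG : MulAction.IsMultiplyPretransitive G α #g.supportᶜ) {x : Perm α} (hx : Commute x g) :
    ∃ y ∈ G, y⁻¹ * g * y ∈ Subgroup.zpowers g ∧ ∀ a ∉ g.support, y a = x a := by
  obtain ⟨y, hyG, hy⟩ := exists_mem_eqOn_of_isMultiplyPretransitive hG x
  simp only [mem_compl] at hy
  let K := G ⊓ fixingSubgroup (Perm α) (g.support : Set α)ᶜ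
  have mem_K {f : Perm α} : f ∈ K ↔ f ∈ G ∧ ∀ a ∉ g.support, f a = a := by
    simp [K, mem_fixingSubgroup_iff]
  have hgK : g ∈ K := mem_K.mpr ⟨hgG, fun a => Perm.notMem_support.mp⟩
  have hconjK : y⁻¹ * g * y ∈ K := by
    refine mem_K.mpr ⟨G.mul_mem (G.mul_mem (G.inv_mem hyG) hgG) hyG, fun a ha => ?_⟩
    have hxa : g (x a) = x a :=
      Perm.notMem_support.mp fun h => ha ((Perm.mem_support_iff_of_commute hx a).mp h)
    rw [Perm.mul_apply, Perm.mul_apply, hy a ha, hxa, Perm.inv_eq_iff_eq, hy a ha]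
  have card_K : Nat.card K ∣ (#g.support).factorial :=
    card_fixingSubgroup_compl g.support ▸ Subgroup.card_dvd_of_le inf_le_right
  have orderOf_conj : orderOf (y⁻¹ * g * y) = orderOf g := by
    exact SemiconjBy.orderOf_eq y (by simp [SemiconjBy, mul_assoc])
  obtain ⟨k, hk⟩ := exists_conj_mem_zpowers hp card_K (g := ⟨g, hgK⟩) (h := ⟨_, hconjK⟩)
    (by rw [Subgroup.orderOf_mk, hg.orderOf])
    (by rw [Subgroup.orderOf_mk, orderOf_conj, hg.orderOf])
  obtain ⟨hkG, hkfix⟩ := mem_K.mp k.2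
  refine ⟨y * k, G.mul_mem hyG hkG, ?_, fun a ha => ?_⟩
  · obtain ⟨e, he⟩ := hk
    refine ⟨e, (congrArg Subtype.val he).trans ?_⟩
    simp [mul_assoc]
  · rw [Perm.mul_apply, hkfix a ha, hy a ha]

theorem exists_eqOn_support_zpow_of_commute {g z : Perm α} (hg : g.IsCycle)
    (hz : Commute z g) : ∃ j : ℤ, ∀ a ∈ g.support, z a = (g ^ j) a := by
  obtain ⟨hsupp, j, hj⟩ := hg.commute_iff.mp hz
  refine ⟨j, fun a ha => ?_⟩
  have := DFunLike.congr_fun hj a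
  simp only [Perm.ofSubtype_subtypePerm_of_mem hsupp ha] at this
  exact this.symm

/-- Elements of `G` agreeing with `x₁` and `x₂` off the support of `g` can be chosen to normalize
`⟨g⟩`; their commutator then centralizes `g`, and a power of `g` corrects it to `⁅x₁, x₂⁆`. -/
theorem commutatorElement_mem_of_disjoint (hG : MulAction.IsPreprimitive G α) {g : Perm α}
    (hg : g.IsCycle) (hp : (#g.support).Prime) (hgG : g ∈ G) (hα : #g.support < Fintype.card α)
    {x₁ x₂ : Perm α} (hx₁ : x₁.Disjoint g) (hx₂ : x₂.Disjoint g) : ⁅x₁, x₂⁆ ∈ G := by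
  have htrans := isMultiplyPretransitive_card_compl_support hG hg hp hgG hα
  have lift {x : Perm α} (hx : x.Disjoint g) :=
    exists_mem_conj_mem_zpowers_eqOn_compl_support hg hp hgG htrans hx.commute
  obtain ⟨y₁, hy₁G, hy₁g, hy₁⟩ := lift hx₁
  obtain ⟨y₂, hy₂G, hy₂g, hy₂⟩ := lift hx₂
  obtain ⟨j, hj⟩ := exists_eqOn_support_zpow_of_commute hg
    (commute_commutatorElement_of_conj_mem_zpowers hy₁g hy₂g)
  have stable {x : Perm α} (hx : x.Disjoint g) {a : α} (ha : a ∉ g.support) :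
      x a ∉ g.support := fun h => ha ((Perm.mem_support_iff_of_commute hx.commute a).mp h)
  have inv_eq {x y : Perm α} (hx : x.Disjoint g) (hy : ∀ a ∉ g.support, y a = x a) {a : α}
      (ha : a ∉ g.support) : y⁻¹ a = x⁻¹ a := by
    rw [Perm.inv_eq_iff_eq, hy _ (stable hx.inv_left ha)]
    simp
  have hdisj : (⁅x₁, x₂⁆).Disjoint g :=
    ((hx₁.mul_left hx₂).mul_left hx₁.inv_left).mul_left hx₂.inv_left
  have commutator_mem : ⁅y₁, y₂⁆ ∈ G :=
    G.mul_mem (G.mul_mem (G.mul_mem hy₁G hy₂G) (G.inv_mem hy₁G)) (G.inv_mem hy₂G)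
  suffices ⁅x₁, x₂⁆ = (g ^ j)⁻¹ * ⁅y₁, y₂⁆ from
    this ▸ G.mul_mem (G.inv_mem (G.zpow_mem hgG j)) commutator_mem
  ext a
  rw [Perm.mul_apply, Perm.eq_inv_iff_eq]
  by_cases ha : a ∈ g.support
  · rw [hj a ha, (hdisj a).resolve_right (Perm.mem_support.mp ha)]
  · have hcomm : ⁅y₁, y₂⁆ a = ⁅x₁, x₂⁆ a := by
      simp only [commutatorElement_def, Perm.mul_apply]
      rw [inv_eq hx₂ hy₂ ha, inv_eq hx₁ hy₁ (stable hx₂.inv_left ha),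
        hy₂ _ (stable hx₁.inv_left (stable hx₂.inv_left ha)),
        hy₁ _ (stable hx₂ (stable hx₁.inv_left (stable hx₂.inv_left ha)))]
    rw [hcomm]
    exact Perm.zpow_apply_eq_self_of_apply_eq_self (Perm.notMem_support.mp (stable hdisj ha)) j

/-- The commutator of two transpositions moving three fixed points of `g` is a 3-cycle in `G`. -/
theorem alternatingGroup_le_of_isCycle_mem (hG : MulAction.IsPreprimitive G α) {g : Perm α}
    (hg : g.IsCycle) (hp : (#g.support).Prime) (hα : #g.support + 3 ≤ Fintype.card α)
    (hgG : g ∈ G) : alternatingGroup α ≤ G := by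
  have card_compl : #g.supportᶜ = Fintype.card α - #g.support := card_compl _
  obtain ⟨a, b, c, ha, hb, hc, hab, hac, hbc⟩ :=
    two_lt_card_iff.mp (show 2 < #g.supportᶜ by omega)
  rw [mem_compl] at ha hb hc
  have swap_disjoint {u v : α} (hu : u ∉ g.support) (hv : v ∉ g.support) :
      (swap u v).Disjoint g := by
    intro x
    rw [Perm.notMem_support] at hu hv
    rcases eq_or_ne x u with rfl | hxu
    · exact .inr hu
    rcases eq_or_ne x v with rfl | hxv
    · exact .inr hv
    exact .inl (swap_apply_of_ne_of_ne hxu hxv)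
  have isThreeCycle : (⁅swap a b, swap a c⁆).IsThreeCycle := by
    rw [commutatorElement_def, swap_inv, swap_inv, mul_assoc]
    exact (Perm.isThreeCycle_swap_mul_swap_same hab hac hbc).isThreeCycle_sq
  exact Perm.alternatingGroup_le_of_isPreprimitive_of_isThreeCycle_mem hG isThreeCycle <|
    commutatorElement_mem_of_disjoint hG hg hp hgG (by omega)
      (swap_disjoint ha hb) (swap_disjoint ha hc)

end PrimeCycle

/-! ### Intransitive and imprimitive groups -/

section BlockCounting

variable {α : Type*}

theorem dvd_index_of_card_dvd [Finite α] {G : Subgroup (Perm α)} {k m : ℕ} (hG : Nat.card G ∣ k)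
    (hm : m * k = (Nat.card α).factorial) : m ∣ G.index := by
  obtain ⟨l, rfl⟩ := hG
  refine ⟨l, Nat.eq_of_mul_eq_mul_left (Nat.card_pos (α := G)) ?_⟩
  rw [G.card_mul_index, Nat.card_perm, ← hm]
  ring

theorem choose_dvd_index_of_smul_eq [DecidableEq α] {G : Subgroup (Perm α)} {s : Finset α}
    (hs : ∀ g ∈ G, g • s = s) : (Nat.card α).choose #s ∣ G.index := by
  let s' : Set.powersetCard α #s := ⟨s, rfl⟩
  have := Set.powersetCard.isPretransitive (α := α) (n := #s)
  rw [← Set.powersetCard.card, ← MulAction.index_stabilizer_of_transitive (Perm α) s']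
  exact Subgroup.index_dvd_of_le fun g hg => Subtype.ext (hs g hg)

theorem card_dvd_of_equivariant [Finite α] {G : Subgroup (Perm α)} {ι : Type*} [Finite ι]
    [MulAction G ι] (f : α →[G] ι) {d : ℕ} (hf : ∀ i, Nat.card {a // f a = i} = d) :
    Nat.card G ∣ d.factorial ^ Nat.card ι * (Nat.card ι).factorial := by
  cases nonempty_fintype ι
  let φ := MulAction.toPermHom G ι
  have ker_apply (k : φ.ker) (a : α) : f ((k : Perm α) a) = f a :=
    (f.map_smul (k : G) a).trans (DFunLike.congr_fun (MonoidHom.mem_ker.mp k.2) (f a))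
  let toFibers : φ.ker →* ∀ i, Perm {a // f a = i} :=
    { toFun k i := (k : Perm α).subtypePerm fun a => by rw [ker_apply]
      map_one' := rfl
      map_mul' _ _ := rfl }
  have toFibers_injective : Function.Injective toFibers := fun k l h => by
    ext a
    exact congrArg Subtype.val (DFunLike.congr_fun (congrFun h (f a)) ⟨a, rfl⟩)
  have card_ker : Nat.card φ.ker ∣ d.factorial ^ Nat.card ι := by
    simpa [Nat.card_pi, Nat.card_perm, hf] using
      Subgroup.card_dvd_of_injective toFibers toFibers_injective
  have card_range : Nat.card φ.range ∣ (Nat.card ι).factorial :=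
    Nat.card_perm (α := ι) ▸ Subgroup.card_subgroup_dvd_card φ.range
  rw [← φ.ker.card_mul_index, Subgroup.index_ker]
  exact mul_dvd_mul card_ker card_range

theorem exists_mulActionHom_orbit_of_isBlock {G : Type*} [Group G] [MulAction G α]
    [MulAction.IsPretransitive G α] {B : Set α} (hB : MulAction.IsBlock G B) (hne : B.Nonempty) :
    ∃ f : α →[G] MulAction.orbit G B, ∀ a c, f a = c ↔ a ∈ (c : Set α) := by
  obtain ⟨b, hb⟩ := hne
  have mem_translate (a : α) : ∃ g : G, a ∈ g • B := by
    obtain ⟨g, rfl⟩ := MulAction.exists_smul_eq G b a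
    exact ⟨g, Set.smul_mem_smul_set hb⟩
  choose γ hγ using mem_translate
  let f (a : α) : MulAction.orbit G B := ⟨γ a • B, MulAction.mem_orbit _ _⟩
  have f_eq_iff (a : α) (c : MulAction.orbit G B) : f a = c ↔ a ∈ (c : Set α) := by
    constructor
    · rintro rfl
      exact hγ a
    · obtain ⟨_, g, rfl⟩ := c
      exact fun ha => Subtype.ext
        (MulAction.isBlock_iff_smul_eq_smul_of_nonempty.mp hB ⟨a, hγ a, ha⟩)
  refine ⟨⟨f, fun g a => ?_⟩, f_eq_iff⟩
  rw [f_eq_iff]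
  exact Set.smul_mem_smul_set ((f_eq_iff a _).mp rfl)

theorem uniformBell_dvd_index_of_isBlock [Finite α] {G : Subgroup (Perm α)}
    [MulAction.IsPretransitive G α] {B : Set α} (hB : MulAction.IsBlock G B) (hne : B.Nonempty) :
    Nat.uniformBell (MulAction.orbit G B).ncard B.ncard ∣ G.index := by
  obtain ⟨f, hf⟩ := exists_mulActionHom_orbit_of_isBlock hB hne
  have card_fiber (c : MulAction.orbit G B) : Nat.card {a // f a = c} = B.ncard := by
    rw [Nat.card_congr (Equiv.subtypeEquivRight fun a => hf a c)]
    obtain ⟨_, g, rfl⟩ := c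
    exact Set.ncard_image_of_injective B (MulAction.injective g)
  refine dvd_index_of_card_dvd (card_dvd_of_equivariant f card_fiber) ?_
  rw [Nat.card_coe_set_eq, ← mul_assoc, Nat.uniformBell_mul_eq _ (((Set.ncard_pos).mpr hne).ne'),
    mul_comm, hB.ncard_block_mul_ncard_orbit_eq hne]

end BlockCounting

section Primitive

variable {α : Type*} [Fintype α] {G : Subgroup (Perm α)}

theorem isPretransitive_of_index_dvd (hα : 7 ≤ Fintype.card α)
    (hG : (G.index : ℤ) ∣ twiceEvenDerangements (Fintype.card α)) :
    MulAction.IsPretransitive G α := by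
  classical
  have : Nonempty α := Fintype.card_pos_iff.mp (by omega)
  let a : α := Classical.arbitrary α
  rw [MulAction.isPretransitive_iff_orbit_eq_univ a]
  by_contra orbit_ne
  let s := (MulAction.orbit G a).toFinset
  have smul_s (g : Perm α) (hg : g ∈ G) : g • s = s := by
    rw [← coe_inj, coe_smul_finset, Set.coe_toFinset]
    exact MulAction.smul_orbit (⟨g, hg⟩ : G) a
  have card_ne_zero : #s ≠ 0 :=
    card_ne_zero_of_mem (Set.mem_toFinset.mpr (MulAction.mem_orbit_self a))
  have card_lt : #s < Fintype.card α := by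
    rw [card_lt_iff_ne_univ, ne_eq, Set.toFinset_eq_univ]
    exact orbit_ne
  refine not_choose_dvd_twiceEvenDerangements hα card_ne_zero card_lt (.trans ?_ hG)
  exact_mod_cast Nat.card_eq_fintype_card (α := α) ▸ choose_dvd_index_of_smul_eq smul_s

theorem isPreprimitive_of_index_dvd (hα : 7 ≤ Fintype.card α)
    (hG : (G.index : ℤ) ∣ twiceEvenDerangements (Fintype.card α)) :
    MulAction.IsPreprimitive G α := by
  have := isPretransitive_of_index_dvd hα hG
  refine ⟨fun {B} hB => ?_⟩
  by_contra hnontrivial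
  rw [MulAction.IsTrivialBlock, not_or, Set.not_subsingleton_iff] at hnontrivial
  obtain ⟨hBnontrivial, hBuniv⟩ := hnontrivial
  have card_mul : B.ncard * (MulAction.orbit G B).ncard = Fintype.card α := by
    rw [hB.ncard_block_mul_ncard_orbit_eq hBnontrivial.nonempty, Nat.card_eq_fintype_card]
  have two_le_ncard : 2 ≤ B.ncard := (Set.one_lt_ncard).mpr hBnontrivial
  have ncard_lt : B.ncard < Fintype.card α :=
    Nat.card_eq_fintype_card (α := α) ▸ Set.ncard_lt_card hBuniv
  have two_le_orbit : 2 ≤ (MulAction.orbit G B).ncard := by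
    by_contra! h
    interval_cases (MulAction.orbit G B).ncard <;> omega
  rw [← card_mul, mul_comm] at hα hG
  refine not_uniformBell_dvd_twiceEvenDerangements two_le_orbit two_le_ncard hα (.trans ?_ hG)
  exact_mod_cast uniformBell_dvd_index_of_isBlock hB hBnontrivial.nonempty

theorem alternatingGroup_le_of_index_dvd [DecidableEq α] (hα : 8 ≤ Fintype.card α)
    (hG : (G.index : ℤ) ∣ twiceEvenDerangements (Fintype.card α)) : alternatingGroup α ≤ G := by
  obtain ⟨p, hp, hpα, hpE⟩ := exists_prime_not_dvd_twiceEvenDerangements hα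
  obtain ⟨g, hgG, hg, rfl⟩ := exists_isCycle_mem_of_not_dvd_index hp (by omega)
    fun hdvd => hpE ((Int.natCast_dvd_natCast.mpr hdvd).trans hG)
  exact alternatingGroup_le_of_isCycle_mem
    (isPreprimitive_of_index_dvd (by omega) hG) hg hp hpα hgG

theorem eq_alternatingGroup_of_le [DecidableEq α] [Nontrivial α] (hle : alternatingGroup α ≤ G)
    (htop : G ≠ ⊤) : G = alternatingGroup α := by
  have index_mul := Subgroup.relIndex_mul_index hle
  rw [alternatingGroup.index_eq_two] at index_mul
  have index_eq : G.index = 2 :=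
    ((Nat.dvd_prime Nat.prime_two).mp (Dvd.intro_left _ index_mul)).resolve_left
      (Subgroup.index_eq_one.not.mpr htop)
  exact le_antisymm (Subgroup.relIndex_eq_one.mp (by rw [index_eq] at index_mul; omega)) hle

end Primitive

/-! ### Degree seven -/

section FullCycle

variable {α : Type*} [Fintype α] {G : Subgroup (Perm α)}

theorem card_subgroup_mul_index (G : Subgroup (Perm α)) :
    Nat.card G * G.index = (Fintype.card α).factorial := by
  rw [G.card_mul_index, Nat.card_perm, Nat.card_eq_fintype_card]

theorem alternatingGroup_le_of_index_lt_prime [DecidableEq α] (hα : 5 ≤ Fintype.card α) {p : ℕ}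
    (hp : p.Prime) (hpα : p ≤ Fintype.card α) (hG : G.index < p) : alternatingGroup α ≤ G := by
  obtain ⟨g, -, hg, rfl⟩ := exists_isCycle_mem_of_not_dvd_index (G := ⊤) hp hpα
    (by simpa using hp.ne_one)
  rw [← hg.orderOf] at hp hG
  have hgcore : g ∈ G.normalCore := fun t => by
    have orderOf_conj : orderOf (t * g * t⁻¹) = orderOf g :=
      SemiconjBy.orderOf_eq t⁻¹ (by simp [SemiconjBy, mul_assoc])
    exact mem_of_index_lt_orderOf Subgroup.FiniteIndex.index_ne_zero (orderOf_conj ▸ hp)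
      (orderOf_conj ▸ hG)
  have : Nontrivial G.normalCore :=
    (Subgroup.nontrivial_iff_exists_ne_one _).mpr ⟨g, hgcore, hg.ne_one⟩
  exact (Perm.alternatingGroup_le_of_normal (Nat.card_eq_fintype_card (α := α) ▸ hα) this).trans
    G.normalCore_le

theorem mem_zpowers_of_commute (hα : (Fintype.card α).Prime) {c z : Perm α}
    (hc : orderOf c = Fintype.card α) (hz : Commute z c) : z ∈ Subgroup.zpowers c := by
  classical
  have isCycle : c.IsCycle := Perm.isCycle_of_prime_order'' hα hc
  obtain ⟨j, hj⟩ := exists_eqOn_support_zpow_of_commute isCycle hz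
  have support_eq : c.support = univ := by rw [← card_eq_iff_eq_univ, ← isCycle.orderOf, hc]
  exact ⟨j, Perm.ext fun a => (hj a (support_eq ▸ mem_univ a)).symm⟩

/-- By Sylow's theorem `σ * t` normalizes `⟨c⟩` for some `t ∈ G`, and then its commutator with `y`
centralizes `c`, hence lies in `⟨c⟩ ≤ G`. -/
theorem conj_mem_of_conj_mem_zpowers (hα : (Fintype.card α).Prime) {c y σ : Perm α}
    (hc : orderOf c = Fintype.card α) (hcG : c ∈ G) (hcσ : σ⁻¹ * c * σ ∈ G) (hyG : y ∈ G)
    (hy : y⁻¹ * c * y ∈ Subgroup.zpowers c) : σ⁻¹ * y * σ ∈ G := by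
  have card_G : Nat.card G ∣ (Fintype.card α).factorial :=
    Dvd.intro _ (card_subgroup_mul_index G)
  have orderOf_conj : orderOf (σ⁻¹ * c * σ) = orderOf c :=
    SemiconjBy.orderOf_eq σ (by simp [SemiconjBy, mul_assoc])
  obtain ⟨t, e, he⟩ := exists_conj_mem_zpowers hα card_G (g := ⟨c, hcG⟩) (h := ⟨_, hcσ⟩)
    (by rw [Subgroup.orderOf_mk, hc]) (by rw [Subgroup.orderOf_mk, orderOf_conj, hc])
  let ν := σ * t
  have hν : ν⁻¹ * c * ν = c ^ e := by
    simpa [ν, mul_assoc] using (congrArg Subtype.val he).symm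
  obtain ⟨k, hk⟩ := mem_zpowers_of_commute hα hc
    (commute_commutatorElement_of_conj_mem_zpowers hy ⟨e, hν.symm⟩)
  have conj_ν : ν⁻¹ * y * ν = (c ^ e) ^ k * y := by
    calc ν⁻¹ * y * ν = ν⁻¹ * ⁅y, ν⁆ * ν⁻¹⁻¹ * y := by rw [commutatorElement_def]; group
      _ = (c ^ e) ^ k * y := by rw [← hk, ← conj_zpow, inv_inv, hν]
  have conj_σ : σ⁻¹ * y * σ = t * (ν⁻¹ * y * ν) * (t : Perm α)⁻¹ := by
    simp only [ν]
    group
  rw [conj_σ, conj_ν]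
  exact G.mul_mem (G.mul_mem t.2 (G.mul_mem (G.zpow_mem (G.zpow_mem hcG e) k) hyG))
    (G.inv_mem t.2)

end FullCycle

/-- A derangement fixed under conjugation by `u` commutes with `u`, so it fixes the only fixed point
of `u`. -/
theorem prime_dvd_ncard_coset_derangements {α : Type*} [Finite α] {G : Subgroup (Perm α)} {p : ℕ}
    (hp : p.Prime) {u σ : Perm α} (hu : orderOf u = p) (huG : u ∈ G) (huσ : σ⁻¹ * u * σ ∈ G) {a : α}
    (ha : ∀ b, u b = b ↔ b = a) : p ∣ (σ • (G : Set (Perm α)) ∩ derangements α).ncard := by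
  classical
  cases nonempty_fintype α
  have := Fact.mk hp
  let X := σ • (G : Set (Perm α)) ∩ derangements α
  have conj_mem_coset (τ : Perm α) : u * τ * u⁻¹ ∈ σ • (G : Set (Perm α)) ↔
      τ ∈ σ • (G : Set (Perm α)) := by
    simp only [mem_leftCoset_iff, SetLike.mem_coe]
    rw [show σ⁻¹ * (u * τ * u⁻¹) = (σ⁻¹ * u * σ) * (σ⁻¹ * τ) * u⁻¹ by group,
      G.mul_mem_cancel_right (G.inv_mem huG), G.mul_mem_cancel_left huσ]
  have conj_mem_derangements (τ : Perm α) : u * τ * u⁻¹ ∈ derangements α ↔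
      τ ∈ derangements α := by
    refine (u.forall_congr fun b => ?_).symm
    simp
  let conj : Perm X := Perm.subtypePerm (MulAut.conj u).toEquiv fun τ =>
    and_congr (conj_mem_coset τ) (conj_mem_derangements τ)
  have conj_apply (τ : X) : (conj τ : Perm α) = u * τ * u⁻¹ := rfl
  have conj_pow : conj ^ p ^ 1 = 1 := by
    have conj_pow_apply (k : ℕ) (τ : X) : ((conj ^ k) τ : Perm α) = u ^ k * τ * (u ^ k)⁻¹ := by
      induction k with
      | zero => simp
      | succ k ih =>
        rw [pow_succ', Perm.mul_apply, conj_apply, ih]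
        group
    ext τ : 2
    rw [conj_pow_apply, pow_one, ← hu, pow_orderOf_eq_one]
    simp
  by_contra hdvd
  obtain ⟨τ, hτ⟩ := Perm.exists_fixed_point_of_prime (α := X)
    (by rwa [← Nat.card_eq_fintype_card]) conj_pow
  have commute : u * τ = τ * u := mul_inv_eq_iff_eq_mul.mp (congrArg Subtype.val hτ)
  have fixed : u (τ.1 a) = τ.1 a := by
    rw [← Perm.mul_apply, commute, Perm.mul_apply, (ha a).mpr rfl]
  exact τ.2.2 a ((ha _).mp fixed)

section DegreeSeven

variable {α : Type*} [Fintype α] {G : Subgroup (Perm α)}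

theorem exists_forall_apply_eq_iff_of_not_isCycle {u : Perm α} (hp : (orderOf u).Prime)
    (hα : Fintype.card α = 2 * orderOf u + 1) (hu : ¬ u.IsCycle) : ∃ a, ∀ b, u b = b ↔ b = a := by
  classical
  have le_card : 2 * orderOf u ≤ #u.support :=
    not_lt.mp fun hlt => hu (Perm.isCycle_of_prime_order hp hlt)
  have dvd_card : orderOf u ∣ #u.support := by
    obtain ⟨k, hk⟩ := Perm.cycleType_prime_order hp
    exact ⟨k + 1, by rw [← Perm.sum_cycleType, hk, Multiset.sum_replicate, smul_eq_mul, mul_comm]⟩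
  have card_ne : #u.support ≠ 2 * orderOf u + 1 := fun h =>
    hp.one_lt.ne' <| Nat.dvd_one.mp <| (Nat.dvd_add_right (Dvd.intro_left 2 rfl)).mp (h ▸ dvd_card)
  have card_compl : #u.supportᶜ = 1 := by
    have := card_le_univ u.support
    rw [card_compl]
    omega
  obtain ⟨a, ha⟩ := card_eq_one.mp card_compl
  exact ⟨a, fun b => by rw [← Perm.notMem_support, ← mem_compl, ha, mem_singleton]⟩

theorem card_normalizer_dvd_and_index_normalizer_modEq (hα : (Fintype.card α).Prime) {c : G}
    (hc : orderOf c = Fintype.card α) :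
    Nat.card (Subgroup.normalizer (Subgroup.zpowers c : Set G)) ∣
        Fintype.card α * (Fintype.card α - 1) ∧
      (Subgroup.normalizer (Subgroup.zpowers c : Set G)).index ≡ 1 [MOD Fintype.card α] := by
  have centralizer_le : Subgroup.centralizer (Subgroup.zpowers c : Set G) ≤
      Subgroup.zpowers c := fun z hz => by
    have commute : Commute (z : Perm α) c := congrArg Subtype.val
      (Subgroup.mem_centralizer_iff.mp hz c (Subgroup.mem_zpowers c)).symm
    obtain ⟨k, hk⟩ := mem_zpowers_of_commute hα ((Subgroup.orderOf_coe c).trans hc) commute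
    exact ⟨k, Subtype.ext hk⟩
  constructor
  · simpa only [hc, Nat.totient_prime hα] using card_normalizer_zpowers_dvd centralizer_le
  · exact index_normalizer_zpowers_modEq_one hα hc <|
      not_dvd_index_zpowers hα (Dvd.intro _ (card_subgroup_mul_index G)) hc

theorem eq_fifteen_or_thirty_and_three_dvd {i k m : ℕ} (hmki : m * k * i = 5040) (hm : m ∣ 42)
    (hk : k ≡ 1 [MOD 7]) (hi : i ∣ 60) (hthree : 3 ∣ i) (hseven : 7 ≤ i) :
    (i = 15 ∨ i = 30) ∧ 3 ∣ m := by
  have hi' : i ∈ Nat.divisors 60 := by simpa using hi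
  have hm' : m ∈ Nat.divisors 42 := by simpa using hm
  rw [show Nat.divisors 60 = {1, 2, 3, 4, 5, 6, 10, 12, 15, 20, 30, 60} by decide] at hi'
  rw [show Nat.divisors 42 = {1, 2, 3, 6, 7, 14, 21, 42} by decide] at hm'
  simp only [mem_insert, mem_singleton] at hi' hm'
  rw [Nat.ModEq] at hk
  obtain rfl | rfl | rfl | rfl : i = 12 ∨ i = 15 ∨ i = 30 ∨ i = 60 := by omega
  all_goals
    rcases hm' with rfl | rfl | rfl | rfl | rfl | rfl | rfl | rfl <;> omega

theorem index_eq_and_exists_conj_mem_zpowers (hα : Fintype.card α = 7) {c : Perm α}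
    (hc : orderOf c = 7) (hcG : c ∈ G) (hindex : G.index ∣ 60) (hthree : 3 ∣ G.index)
    (hseven : 7 ≤ G.index) : (G.index = 15 ∨ G.index = 30) ∧
      ∃ y ∈ G, orderOf y = 3 ∧ y⁻¹ * c * y ∈ Subgroup.zpowers c := by
  have hc' : orderOf (⟨c, hcG⟩ : G) = Fintype.card α := by rw [Subgroup.orderOf_mk, hc, hα]
  let N := Subgroup.normalizer (Subgroup.zpowers (⟨c, hcG⟩ : G) : Set G)
  obtain ⟨card_N, index_N⟩ :=
    card_normalizer_dvd_and_index_normalizer_modEq (hα ▸ Nat.prime_seven) hc'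
  have card_mul : Nat.card N * N.index * G.index = 5040 := by
    rw [N.card_mul_index, card_subgroup_mul_index, hα]
    rfl
  rw [hα] at card_N index_N
  obtain ⟨index_eq, three_dvd⟩ :=
    eq_fifteen_or_thirty_and_three_dvd card_mul card_N index_N hindex hthree hseven
  refine ⟨index_eq, ?_⟩
  obtain ⟨y, hyN, hy⟩ := exists_mem_orderOf_eq_prime Nat.prime_three three_dvd
  refine ⟨y, y.2, by simpa using hy, ?_⟩
  obtain ⟨k, hk⟩ :=
    (Subgroup.mem_normalizer_iff''.mp hyN _).mp (Subgroup.mem_zpowers (⟨c, hcG⟩ : G))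
  exact ⟨k, congrArg Subtype.val hk⟩

theorem le_alternatingGroup_of_index_eq_thirty [DecidableEq α] (hα : Fintype.card α = 7)
    {c : Perm α} (hc : orderOf c = 7) (hcG : c ∈ G) (hindex : G.index = 30) :
    G ≤ alternatingGroup α := by
  have : Nontrivial α := Fintype.one_lt_card_iff_nontrivial.mp (by omega)
  have hcA : c ∈ alternatingGroup α := by
    have sq : c = c ^ 4 * c ^ 4 := by
      rw [← pow_add, pow_succ c 7, ← hc, pow_orderOf_eq_one, one_mul]
    rw [Perm.mem_alternatingGroup, sq, map_mul, Int.units_mul_self]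
  have relIndex_dvd : (alternatingGroup α).relIndex G ∣ 2 :=
    alternatingGroup.index_eq_two (α := α) ▸ Subgroup.relIndex_dvd_index_of_normal _ _
  rw [← Subgroup.relIndex_eq_one]
  refine ((Nat.dvd_prime Nat.prime_two).mp relIndex_dvd).resolve_right fun relIndex_eq => ?_
  have index_inf : (G ⊓ alternatingGroup α).index = 60 := by
    rw [← Subgroup.relIndex_mul_index inf_le_left, Subgroup.inf_relIndex_left, relIndex_eq, hindex]
  have := (index_eq_and_exists_conj_mem_zpowers hα hc (Subgroup.mem_inf.mpr ⟨hcG, hcA⟩)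
    (by rw [index_inf]) (by rw [index_inf]; norm_num) (by rw [index_inf]; norm_num)).1
  omega

theorem relIndex_conj_le_fifteen (hα : Fintype.card α = 7) {c : Perm α}
    (hc : orderOf c = 7) (hcG : c ∈ G) (hindex : G.index = 15 ∨ G.index = 30) (σ : Perm α) :
    (MulAut.conj σ • G).relIndex G ≤ 15 := by
  classical
  have : Nontrivial α := Fintype.one_lt_card_iff_nontrivial.mp (by omega)
  have index_conj : (MulAut.conj σ • G).index = G.index :=
    G.index_map_equiv (MulAut.conj σ)
  rcases hindex with hindex | hindex
  · rw [← hindex, ← index_conj, ← Subgroup.relIndex_top_right]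
    exact Subgroup.relIndex_le_of_le_right le_top (by simp [index_conj, hindex])
  · have hle := le_alternatingGroup_of_index_eq_thirty hα hc hcG hindex
    have hle' : MulAut.conj σ • G ≤ alternatingGroup α :=
      Subgroup.Normal.conj_smul_eq_self σ (alternatingGroup α) ▸
        Subgroup.pointwise_smul_le_pointwise_smul_iff.mpr hle
    have relIndex_mul := Subgroup.relIndex_mul_index hle'
    rw [index_conj, hindex, alternatingGroup.index_eq_two] at relIndex_mul
    have := Subgroup.relIndex_le_of_le_right (H := MulAut.conj σ • G) hle (by omega)
    omega

theorem exists_orderOf_eq_three_conj_mem (hα : Fintype.card α = 7) {c : Perm α}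
    (hc : orderOf c = 7) (hcG : c ∈ G) (hindex : G.index ∣ 60) (hthree : 3 ∣ G.index)
    (hseven : 7 ≤ G.index) (σ : Perm α) : ∃ y ∈ G, σ⁻¹ * y * σ ∈ G ∧ orderOf y = 3 := by
  classical
  have normalizing {c : Perm α} (hc : orderOf c = 7) (hcG : c ∈ G) :=
    index_eq_and_exists_conj_mem_zpowers hα hc hcG hindex hthree hseven
  have index_eq := (normalizing hc hcG).1
  let L := G ⊓ MulAut.conj σ • G
  have mem_L {g : Perm α} : g ∈ L ↔ g ∈ G ∧ σ⁻¹ * g * σ ∈ G := by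
    simp [L, Subgroup.mem_pointwise_smul_iff_inv_smul_mem]
  have relIndex_le := relIndex_conj_le_fifteen hα hc hcG index_eq σ
  have card_mul : Nat.card L * (MulAut.conj σ • G).relIndex G = Nat.card G :=
    card_inf_mul_relIndex _ _
  have card_G : Nat.card G = 336 ∨ Nat.card G = 168 := by
    have : Nat.card G * G.index = 5040 := by rw [card_subgroup_mul_index, hα]; rfl
    rcases index_eq with h | h <;> rw [h] at this <;> omega
  by_cases seven_dvd : 7 ∣ (MulAut.conj σ • G).relIndex G
  · have three_dvd_card : 3 ∣ Nat.card L := by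
      obtain ⟨k, hk⟩ := seven_dvd
      have : k = 0 ∨ k = 1 ∨ k = 2 := by omega
      rcases this with rfl | rfl | rfl <;> rw [hk] at card_mul <;> omega
    obtain ⟨y, hyL, hy⟩ := exists_mem_orderOf_eq_prime Nat.prime_three three_dvd_card
    obtain ⟨hyG, hyσ⟩ := mem_L.mp hyL
    exact ⟨y, hyG, hyσ, hy⟩
  · have seven_dvd_card : 7 ∣ Nat.card L := by
      refine ((Nat.prime_seven.dvd_mul).mp ?_).resolve_right seven_dvd
      omega
    obtain ⟨b, hbL, hb⟩ := exists_mem_orderOf_eq_prime Nat.prime_seven seven_dvd_card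
    obtain ⟨hbG, hbσ⟩ := mem_L.mp hbL
    obtain ⟨y, hyG, hy, hyb⟩ := (normalizing hb hbG).2
    exact ⟨y, hyG, conj_mem_of_conj_mem_zpowers (hα ▸ Nat.prime_seven) (hb.trans hα.symm)
      hbG hbσ hyG hyb, hy⟩

theorem alternatingGroup_le_of_card_eq_seven [DecidableEq α] (hα : Fintype.card α = 7)
    {σ : Perm α} (h : ((σ • (G : Set (Perm α)) ∩ derangements α).ncard * G.index : ℤ) =
      twiceEvenDerangements (Fintype.card α)) : alternatingGroup α ≤ G := by
  by_contra not_le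
  have prim : MulAction.IsPreprimitive G α :=
    isPreprimitive_of_index_dvd hα.ge (Dvd.intro_left _ h)
  have not_isCycle {g : Perm α} (hgG : g ∈ G) (hg : orderOf g = 3) : ¬ g.IsCycle := fun hcycle =>
    not_le <| Perm.alternatingGroup_le_of_isPreprimitive_of_isThreeCycle_mem prim
      (card_support_eq_three_iff.mp (hcycle.orderOf ▸ hg)) hgG
  have card_mul : (σ • (G : Set (Perm α)) ∩ derangements α).ncard * G.index = 1860 := by
    rw [hα, twiceEvenDerangements_seven] at h
    exact_mod_cast h
  have index_dvd : G.index ∣ 60 :=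
    Nat.dvd_gcd (m := 1860) (n := 5040) (Dvd.intro_left _ card_mul)
      (Dvd.intro_left _ ((card_subgroup_mul_index G).trans (by rw [hα]; rfl)))
  obtain ⟨c, hcG, hc, hc7⟩ := exists_isCycle_mem_of_not_dvd_index (G := G) Nat.prime_seven hα.ge
    fun h7 => absurd (h7.trans index_dvd) (by norm_num)
  have three_dvd : 3 ∣ G.index := by
    by_contra h3
    obtain ⟨g, hgG, hg, hg3⟩ := exists_isCycle_mem_of_not_dvd_index (G := G) Nat.prime_three
      (by omega) h3
    exact not_isCycle hgG (hg.orderOf.trans hg3) hg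
  have seven_le : 7 ≤ G.index := by
    by_contra! hlt
    exact not_le (alternatingGroup_le_of_index_lt_prime (by omega) Nat.prime_seven hα.ge hlt)
  obtain ⟨y, hyG, hyσ, hy⟩ := exists_orderOf_eq_three_conj_mem hα (hc.orderOf.trans hc7) hcG
    index_dvd three_dvd seven_le σ
  obtain ⟨a, ha⟩ := exists_forall_apply_eq_iff_of_not_isCycle (hy ▸ Nat.prime_three)
    (by rw [hy, hα]) (not_isCycle hyG hy)
  have nine_dvd : 3 * 3 ∣ 1860 := card_mul ▸ mul_dvd_mul
    (prime_dvd_ncard_coset_derangements Nat.prime_three hy hyG hyσ ha) three_dvd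
  norm_num at nine_dvd

end DegreeSeven

theorem derangement_proportion_characterizes_alternating_general {α : Type*} [Fintype α]
    [DecidableEq α] (hα : 7 ≤ Fintype.card α) {G : Subgroup (Perm α)} {σ : Perm α}
    (h : ((σ • (G : Set (Perm α)) ∩ derangements α).ncard : ℚ) / (σ • (G : Set (Perm α))).ncard =
      ((alternatingGroup α : Set (Perm α)) ∩ derangements α).ncard /
        Nat.card (alternatingGroup α)) :
    G = alternatingGroup α := by
  have : Nontrivial α := Fintype.one_lt_card_iff_nontrivial.mp (by omega)
  have ncard_mul_index := ncard_coset_derangements_mul_index h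
  have alternatingGroup_le : alternatingGroup α ≤ G := by
    rcases hα.eq_or_lt with card_eq | card_gt
    · exact alternatingGroup_le_of_card_eq_seven card_eq.symm ncard_mul_index
    · exact alternatingGroup_le_of_index_dvd card_gt (Dvd.intro_left _ ncard_mul_index)
  exact eq_alternatingGroup_of_le alternatingGroup_le
    (ne_top_of_ncard_coset_derangements_mul_index ncard_mul_index)

theorem derangement_proportion_characterizes_alternating
    (n : ℕ) (hn : 7 ≤ n) (G : Subgroup (Equiv.Perm (Fin n)))
    (C : Set (Equiv.Perm (Fin n)))
    (hC : ∃ σ : Equiv.Perm (Fin n), C = {τ : Equiv.Perm (Fin n) | ∃ g ∈ G, τ = σ * g})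
    (h : ({σ ∈ C | ∀ x, σ x ≠ x}.ncard : ℚ) / (C.ncard : ℚ)
        = ({σ : Equiv.Perm (Fin n) | σ ∈ alternatingGroup (Fin n) ∧ ∀ x, σ x ≠ x}.ncard : ℚ)
          / (Nat.card (alternatingGroup (Fin n)) : ℚ)) :
    G = alternatingGroup (Fin n) := by
  obtain ⟨σ, rfl⟩ := hC
  have coset_eq : {τ | ∃ g ∈ G, τ = σ * g} = σ • (G : Set (Equiv.Perm (Fin n))) := by
    ext τ
    simp [Set.mem_smul_set, eq_comm]
  rw [coset_eq] at h
  exact derangement_proportion_characterizes_alternating_general (by simpa using hn) h
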